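/- For every n ≥ 1, every k ≥ 2, and every J : Fin n → Fin n → ℝ, letting Z = Σ_{x ∈ {-1,1}^n} exp(Σ_{i,j} J i j · x i · x j), we have log Z ≤ sup over all SA(k)-consistent families (μ_S) of [ Σ_{i,j} J i j · E_{μ_{{i,j}}}[x i · x j] + min over S ⊆ Fin n, |S| ≤ k−1 of ( H(μ_S) + Σ_{i ∉ S} H(μ_i | μ_S) ) ]. In particular, every probability distribution on {-1,1}^n induces an SA(k)-consistent family via its marginals, and the relaxation value upper-bounds log Z. -/

import Mathlib

open scoped BigOperators

noncomputable section

/-- The set `{-1, 1}` of spin values. -/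
abbrev B : Finset ℝ := {-1, 1}

/-- The discrete cube `{-1,1}^n`. -/
abbrev Cube (n : ℕ) := Fin n → ↥B

/-- Assignments of spin values to the coordinates in `S`. -/
abbrev Asg {n : ℕ} (S : Finset (Fin n)) := ↥S → ↥B

/-- Shannon entropy (in nats), with the convention `0 * log 0 = 0`. -/
def ent {D : Type*} [Fintype D] (p : D → ℝ) : ℝ := -∑ d, p d * Real.log (p d)

/-- Restriction of an assignment on `S` to a subset `R ⊆ S`. -/
def res {n : ℕ} {R S : Finset (Fin n)} (h : R ⊆ S) (y : Asg S) : Asg R :=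
  fun i => y ⟨i.1, h i.2⟩

/-- The marginal on `R ⊆ S` of a local distribution on assignments to `S`. -/
def margTo {n : ℕ} {S : Finset (Fin n)} (μ : Asg S → ℝ) {R : Finset (Fin n)}
    (h : R ⊆ S) (z : Asg R) : ℝ :=
  ∑ y : Asg S, if res h y = z then μ y else 0

/-- A level-`k` Sherali–Adams consistent family on `Fin n`: local distributions
`μ_S` over assignments to each `S ⊆ Fin n` with `|S| ≤ k`, nonnegative, summing
to `1`, and consistent on intersections whenever `|S ∪ T| ≤ k`. -/
structure SAFamily (n k : ℕ) where
  μ : (S : Finset (Fin n)) → Asg S → ℝ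
  nonneg : ∀ S : Finset (Fin n), S.card ≤ k → ∀ y : Asg S, 0 ≤ μ S y
  sum_one : ∀ S : Finset (Fin n), S.card ≤ k → ∑ y : Asg S, μ S y = 1
  consistent : ∀ S T : Finset (Fin n), (S ∪ T).card ≤ k → ∀ z : Asg (S ∩ T),
    margTo (μ S) Finset.inter_subset_left z = margTo (μ T) Finset.inter_subset_right z

/-- Extension of an assignment on `S` to `insert i S` with value `a` at `i`. -/
def extAsg {n : ℕ} {S : Finset (Fin n)} (i : Fin n) (y : Asg S) (a : ↥B) :
    Asg (insert i S) :=
  fun j => if h : j.1 = i then a else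
    y ⟨j.1, by
      rcases Finset.mem_insert.mp j.2 with h' | h'
      · exact absurd h' h
      · exact h'⟩

/-- The conditional entropy `H(μ_i | μ_S)` computed from the local distributions
`μ_{S∪{i}}` and `μ_S` of an SA family (terms with `μ_S(x_S) = 0` contribute `0`). -/
def condEnt {n k : ℕ} (F : SAFamily n k) (S : Finset (Fin n)) (i : Fin n) : ℝ :=
  ∑ y : Asg S, F.μ S y *
    ent (fun a : ↥B => F.μ (insert i S) (extAsg i y a) / F.μ S y)

/-- The pairwise correlation `E_{μ_{{i,j}}}[x_i x_j]` of an SA family. -/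
def pairExp {n k : ℕ} (F : SAFamily n k) (i j : Fin n) : ℝ :=
  ∑ y : Asg ({i, j} : Finset (Fin n)),
    F.μ {i, j} y * (y ⟨i, by simp⟩ : ℝ) * (y ⟨j, by simp⟩ : ℝ)

/-- The augmented mean-field pseudo-entropy of an SA family at level `k'`:
`min_{|S| ≤ k'} [ H(μ_S) + Σ_{i ∉ S} H(μ_i | μ_S) ]`. -/
def pseudoEnt {n k : ℕ} (F : SAFamily n k) (k' : ℕ) : ℝ :=
  (Finset.univ.filter (fun S : Finset (Fin n) => S.card ≤ k')).inf'
    ⟨∅, Finset.mem_filter.mpr ⟨Finset.mem_univ _, by simp⟩⟩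
    (fun S => ent (F.μ S) + ∑ i ∈ Sᶜ, condEnt F S i)

/-- The total interaction strength `J_T = Σ_{i,j} |J i j|`. -/
def JT {n : ℕ} (J : Fin n → Fin n → ℝ) : ℝ := ∑ i : Fin n, ∑ j : Fin n, |J i j|

/-- `E[x_i | x_S]`, computed from `μ_{S∪{i}}` and `μ_S`
(equal to `0` when `μ_S(x_S) = 0`, since `·/0 = 0` in `ℝ`). -/
def condExp1 {n k : ℕ} (F : SAFamily n k) (S : Finset (Fin n)) (y : Asg S) (i : Fin n) : ℝ :=
  (∑ z : Asg (S ∪ {i}), if res Finset.subset_union_left z = y then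
      F.μ (S ∪ {i}) z * (z ⟨i, by simp⟩ : ℝ) else 0) / F.μ S y

/-- `E[x_i x_j | x_S]`, computed from `μ_{S∪{i,j}}` and `μ_S`. -/
def condExp2 {n k : ℕ} (F : SAFamily n k) (S : Finset (Fin n)) (y : Asg S) (i j : Fin n) : ℝ :=
  (∑ z : Asg (S ∪ {i, j}), if res Finset.subset_union_left z = y then
      F.μ (S ∪ {i, j}) z * (z ⟨i, by simp⟩ : ℝ) * (z ⟨j, by simp⟩ : ℝ) else 0) / F.μ S y

/-- `Σ_{x_S} μ_S(x_S) ( E[x_i x_j | x_S] − E[x_i | x_S] E[x_j | x_S] )`: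
the average conditional covariance of coordinates `i, j` given `S`. -/
def condCov {n k : ℕ} (F : SAFamily n k) (S : Finset (Fin n)) (i j : Fin n) : ℝ :=
  ∑ y : Asg S, F.μ S y * (condExp2 F S y i j - condExp1 F S y i * condExp1 F S y j)

/-- Restriction of `x ∈ {-1,1}^n` to the coordinates in `S`. -/
def restr {n : ℕ} (S : Finset (Fin n)) (x : Cube n) : Asg S := fun i => x i.1

/-- Marginal distribution of `μ : {-1,1}^n → ℝ` on the coordinates in `S`. -/
def margS {n : ℕ} (μ : Cube n → ℝ) (S : Finset (Fin n)) (y : Asg S) : ℝ :=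
  ∑ x : Cube n, if restr S x = y then μ x else 0

/-!
Under the Gibbs distribution `p ∝ exp E`, `log Z` equals expected energy plus entropy, and the
marginals of `p` form a feasible family whose energy term is the expected energy of `p`. It remains
to see that the entropy of `p` is at most `H(p_S) + Σ_{i ∉ S} H(p_i | p_S)` for every `S`: this is
Gibbs' inequality against the distribution that keeps the law of `x_S` and makes the other
coordinates conditionally independent given `x_S`, each with its own conditional law.
Feasible families have correlations in `[-1, 1]` and bounded pseudo-entropy, so the supremum is
not the junk value of an unbounded set.
-/

section Pushforward

variable {α β γ : Type*} [Fintype α] [DecidableEq β] [DecidableEq γ]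

/-- The law of `f` under the weights `p`, as a function on the codomain of `f`; `margS` and `margTo`
are the instances where `f` restricts an assignment. The weights need not sum to `1`. -/
def pushforward (p : α → ℝ) (f : α → β) (b : β) : ℝ := ∑ a, if f a = b then p a else 0

theorem pushforward_nonneg {p : α → ℝ} (hp : 0 ≤ p) (f : α → β) : 0 ≤ pushforward p f :=
  fun _ => Finset.sum_nonneg fun a _ => ite_nonneg (hp a) le_rfl

theorem pushforward_apply_pos {p : α → ℝ} (hp : 0 ≤ p) (f : α → β) {a : α} (ha : 0 < p a) :
    0 < pushforward p f (f a) :=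
  Finset.sum_pos' (fun b _ => ite_nonneg (hp b) le_rfl) ⟨a, Finset.mem_univ a, by simpa using ha⟩

theorem sum_pushforward_mul [Fintype β] (p : α → ℝ) (f : α → β) (φ : β → ℝ) :
    ∑ b, pushforward p f b * φ b = ∑ a, p a * φ (f a) := by
  simp_rw [pushforward, Finset.sum_mul, ite_mul, zero_mul]
  rw [Finset.sum_comm]
  simp

theorem sum_pushforward [Fintype β] (p : α → ℝ) (f : α → β) :
    ∑ b, pushforward p f b = ∑ a, p a := by
  simpa using sum_pushforward_mul p f fun _ => 1

theorem pushforward_pushforward [Fintype β] (p : α → ℝ) (f : α → β) (g : β → γ) :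
    pushforward (pushforward p f) g = pushforward p (g ∘ f) := by
  funext c
  simpa [pushforward] using sum_pushforward_mul p f fun b => if g b = c then 1 else 0

theorem sum_pushforward_prodMk [Fintype γ] (p : α → ℝ) (f : α → β) (g : α → γ) (b : β) :
    ∑ c, pushforward p (fun a => (f a, g a)) (b, c) = pushforward p f b := by
  simp_rw [pushforward, Prod.mk.injEq, ite_and]
  rw [Finset.sum_comm]
  refine Finset.sum_congr rfl fun a _ => ?_
  split_ifs <;> simp

theorem pushforward_prodMk_le {p : α → ℝ} (hp : 0 ≤ p) (f : α → β) (g : α → γ) (b : β) (c : γ) :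
    pushforward p (fun a => (f a, g a)) (b, c) ≤ pushforward p f b := by
  simp_rw [pushforward, Prod.mk.injEq, ite_and]
  refine Finset.sum_le_sum fun a _ => ?_
  have ha : 0 ≤ p a := hp a
  split_ifs <;> simp [ha]

/-- The conditional probability of `g = c` given `f = b` under the weights `p`; it is `0` when
`f = b` has weight `0`. -/
def condProb (p : α → ℝ) (f : α → β) (g : α → γ) (b : β) (c : γ) : ℝ :=
  pushforward p (fun a => (f a, g a)) (b, c) / pushforward p f b

theorem condProb_nonneg {p : α → ℝ} (hp : 0 ≤ p) (f : α → β) (g : α → γ) (b : β) (c : γ) :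
    0 ≤ condProb p f g b c :=
  div_nonneg (pushforward_nonneg hp _ _) (pushforward_nonneg hp _ _)

theorem condProb_apply_pos {p : α → ℝ} (hp : 0 ≤ p) (f : α → β) (g : α → γ) {a : α}
    (ha : 0 < p a) : 0 < condProb p f g (f a) (g a) :=
  div_pos (pushforward_apply_pos hp (fun a => (f a, g a)) ha) (pushforward_apply_pos hp f ha)

theorem sum_condProb [Fintype γ] (p : α → ℝ) (f : α → β) (g : α → γ) {b : β}
    (hb : pushforward p f b ≠ 0) : ∑ c, condProb p f g b c = 1 := by
  simp_rw [condProb, ← Finset.sum_div]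
  rw [sum_pushforward_prodMk, div_self hb]

theorem pushforward_mul_condProb {p : α → ℝ} (hp : 0 ≤ p) (f : α → β) (g : α → γ) (b : β) (c : γ) :
    pushforward p f b * condProb p f g b c = pushforward p (fun a => (f a, g a)) (b, c) := by
  by_cases hb : pushforward p f b = 0
  · rw [hb, zero_mul]
    exact le_antisymm (pushforward_nonneg hp _ (b, c)) (hb ▸ pushforward_prodMk_le hp f g b c)
  · exact mul_div_cancel₀ _ hb

section CondIndep

variable {ι : Type*} [Fintype ι] {δ : ι → Type*} [∀ i, DecidableEq (δ i)]

/-- The weights that keep the law of `f` and the conditional law of each `g i` given `f`, but make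
the `g i` conditionally independent. -/
def condIndep (p : α → ℝ) (f : α → β) (g : ∀ i, α → δ i) (a : α) : ℝ :=
  pushforward p f (f a) * ∏ i, condProb p f (g i) (f a) (g i a)

theorem condIndep_nonneg {p : α → ℝ} (hp : 0 ≤ p) (f : α → β) (g : ∀ i, α → δ i) :
    0 ≤ condIndep p f g := fun _ =>
  mul_nonneg (pushforward_nonneg hp _ _) (Finset.prod_nonneg fun _ _ => condProb_nonneg hp _ _ _ _)

theorem condIndep_pos {p : α → ℝ} (hp : 0 ≤ p) (f : α → β) (g : ∀ i, α → δ i) {a : α}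
    (ha : 0 < p a) : 0 < condIndep p f g a :=
  mul_pos (pushforward_apply_pos hp f ha)
    (Finset.prod_pos fun i _ => condProb_apply_pos hp f (g i) ha)

theorem sum_condIndep_le [Finite β] [∀ i, Finite (δ i)] {p : α → ℝ} (hp : 0 ≤ p) {f : α → β}
    {g : ∀ i, α → δ i} (hfg : Function.Injective fun a => (f a, fun i => g i a)) :
    ∑ a, condIndep p f g a ≤ ∑ a, p a := by
  classical
  have := Fintype.ofFinite β
  have (i : ι) := Fintype.ofFinite (δ i)
  let w (z : β × ∀ i, δ i) : ℝ := pushforward p f z.1 * ∏ i, condProb p f (g i) z.1 (z.2 i)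
  have w_nonneg (z : β × ∀ i, δ i) : 0 ≤ w z :=
    mul_nonneg (pushforward_nonneg hp _ _)
      (Finset.prod_nonneg fun _ _ => condProb_nonneg hp _ _ _ _)
  have sum_w (b : β) : ∑ c, w (b, c) = pushforward p f b := by
    simp_rw [w, ← Finset.mul_sum, ← Fintype.prod_sum]
    by_cases hb : pushforward p f b = 0
    · rw [hb, zero_mul]
    · simp [sum_condProb p f _ hb]
  calc ∑ a, condIndep p f g a
      = ∑ z ∈ Finset.univ.map ⟨_, hfg⟩, w z := by rw [Finset.sum_map]; rfl
    _ ≤ ∑ z, w z := Finset.sum_le_univ_sum_of_nonneg w_nonneg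
    _ = ∑ a, p a := by simp_rw [Fintype.sum_prod_type, sum_w, sum_pushforward]

end CondIndep

end Pushforward

section Entropy

variable {α β γ : Type*} [Fintype α] [Fintype β] [DecidableEq β] [Fintype γ] [DecidableEq γ]

theorem ent_le_neg_sum_mul_log_add {p q : α → ℝ} (hp : 0 ≤ p) (hq : 0 ≤ q)
    (hpq : ∀ a, 0 < p a → 0 < q a) :
    ent p ≤ -∑ a, p a * Real.log (q a) + (∑ a, q a - ∑ a, p a) := by
  have pointwise (a : α) : p a * Real.log (q a) - p a * Real.log (p a) ≤ q a - p a := by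
    rcases (hp a).eq_or_lt with h | h
    · simpa [← h] using hq a
    · calc p a * Real.log (q a) - p a * Real.log (p a)
          = p a * Real.log (q a / p a) := by rw [Real.log_div (hpq a h).ne' h.ne', mul_sub]
        _ ≤ p a * (q a / p a - 1) :=
          mul_le_mul_of_nonneg_left (Real.log_le_sub_one_of_pos (div_pos (hpq a h) h)) h.le
        _ = q a - p a := by rw [mul_sub, mul_div_cancel₀ _ h.ne', mul_one]
  have summed := Finset.sum_le_sum fun a (_ : a ∈ Finset.univ) => pointwise a
  simp only [Finset.sum_sub_distrib] at summed
  unfold ent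
  linarith

theorem ent_le_card_sub_sum {p : α → ℝ} (hp : 0 ≤ p) : ent p ≤ Fintype.card α - ∑ a, p a := by
  simpa using ent_le_neg_sum_mul_log_add hp zero_le_one fun _ _ => zero_lt_one

theorem ent_pushforward (p : α → ℝ) (f : α → β) :
    ent (pushforward p f) = -∑ a, p a * Real.log (pushforward p f (f a)) :=
  congrArg Neg.neg (sum_pushforward_mul p f fun b => Real.log (pushforward p f b))

/-- The conditional entropy `H(g | f)` under the weights `p`. -/
def entCond (p : α → ℝ) (f : α → β) (g : α → γ) : ℝ :=
  ∑ b, pushforward p f b * ent (condProb p f g b)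

theorem entCond_eq_neg_sum_mul_log {p : α → ℝ} (hp : 0 ≤ p) (f : α → β) (g : α → γ) :
    entCond p f g = -∑ a, p a * Real.log (condProb p f g (f a) (g a)) := by
  calc entCond p f g
      = -∑ b, ∑ c, pushforward p (fun a => (f a, g a)) (b, c) * Real.log (condProb p f g b c) := by
        simp_rw [entCond, ent, mul_neg, Finset.sum_neg_distrib, Finset.mul_sum, ← mul_assoc,
          pushforward_mul_condProb hp]
    _ = -∑ a, p a * Real.log (condProb p f g (f a) (g a)) := by
        rw [← Fintype.sum_prod_type', sum_pushforward_mul]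

section Subadditivity

variable {ι : Type*} [Fintype ι] {δ : ι → Type*} [∀ i, Fintype (δ i)] [∀ i, DecidableEq (δ i)]

theorem neg_sum_mul_log_condIndep {p : α → ℝ} (hp : 0 ≤ p) (f : α → β) (g : ∀ i, α → δ i) :
    -∑ a, p a * Real.log (condIndep p f g a) =
      ent (pushforward p f) + ∑ i, entCond p f (g i) := by
  have log_split (a : α) : p a * Real.log (condIndep p f g a) =
      p a * Real.log (pushforward p f (f a)) +
        ∑ i, p a * Real.log (condProb p f (g i) (f a) (g i a)) := by
    rcases (hp a).eq_or_lt with h | h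
    · simp [← h]
    · have cond_ne (i : ι) := (condProb_apply_pos hp f (g i) h).ne'
      rw [condIndep, Real.log_mul (pushforward_apply_pos hp f h).ne'
        (Finset.prod_ne_zero_iff.mpr fun i _ => cond_ne i), Real.log_prod fun i _ => cond_ne i,
        mul_add, Finset.mul_sum]
  simp_rw [log_split, Finset.sum_add_distrib, ent_pushforward, entCond_eq_neg_sum_mul_log hp,
    Finset.sum_neg_distrib, neg_add]
  rw [Finset.sum_comm]

theorem ent_le_ent_pushforward_add_sum_entCond {p : α → ℝ} (hp : 0 ≤ p) {f : α → β}
    {g : ∀ i, α → δ i} (hfg : Function.Injective fun a => (f a, fun i => g i a)) :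
    ent p ≤ ent (pushforward p f) + ∑ i, entCond p f (g i) := by
  have gibbs_inequality := ent_le_neg_sum_mul_log_add hp (condIndep_nonneg hp f g)
    fun _ => condIndep_pos hp f g
  rw [neg_sum_mul_log_condIndep hp] at gibbs_inequality
  linarith [sum_condIndep_le hp hfg]

end Subadditivity

end Entropy

section GibbsMeasure

variable {α : Type*} [Fintype α]

/-- The Gibbs distribution with weights proportional to `exp E`. -/
def gibbs (E : α → ℝ) (a : α) : ℝ := Real.exp (E a) / ∑ b, Real.exp (E b)

theorem gibbs_nonneg (E : α → ℝ) : 0 ≤ gibbs E :=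
  fun _ => div_nonneg (Real.exp_nonneg _) (Finset.sum_nonneg fun _ _ => Real.exp_nonneg _)

variable [Nonempty α]

theorem sum_exp_pos (E : α → ℝ) : 0 < ∑ a, Real.exp (E a) :=
  Finset.sum_pos (fun _ _ => Real.exp_pos _) Finset.univ_nonempty

theorem sum_gibbs (E : α → ℝ) : ∑ a, gibbs E a = 1 := by
  simp_rw [gibbs, ← Finset.sum_div]
  exact div_self (sum_exp_pos E).ne'

theorem log_sum_exp_eq_sum_gibbs_mul_add_ent (E : α → ℝ) :
    Real.log (∑ a, Real.exp (E a)) = ∑ a, gibbs E a * E a + ent (gibbs E) := by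
  have log_gibbs (a : α) : Real.log (gibbs E a) = E a - Real.log (∑ b, Real.exp (E b)) := by
    rw [gibbs, Real.log_div (Real.exp_ne_zero _) (sum_exp_pos E).ne', Real.log_exp]
  simp_rw [ent, log_gibbs, mul_sub, Finset.sum_sub_distrib, ← Finset.sum_mul, sum_gibbs]
  ring

end GibbsMeasure

instance : Nonempty ↥B := ⟨⟨1, by simp⟩⟩

theorem abs_spin (a : ↥B) : |(a : ℝ)| = 1 := by
  rcases a with ⟨a, ha⟩
  rcases (by simpa using ha : a = -1 ∨ a = 1) with rfl | rfl <;> simp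

section Restriction

variable {n : ℕ}

theorem restr_insert_eq_extAsg_iff {S : Finset (Fin n)} {i : Fin n} (hi : i ∉ S) (x : Cube n)
    (y : Asg S) (a : ↥B) :
    restr (insert i S) x = extAsg i y a ↔ restr S x = y ∧ x i = a := by
  constructor
  · intro h
    refine ⟨funext fun j => ?_, ?_⟩
    · have hj : j.1 ≠ i := fun e => hi (e ▸ j.2)
      simpa [restr, extAsg, hj] using congrFun h ⟨j.1, Finset.mem_insert_of_mem j.2⟩
    · simpa [restr, extAsg] using congrFun h ⟨i, Finset.mem_insert_self i S⟩
  · rintro ⟨rfl, rfl⟩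
    funext j
    by_cases hj : j.1 = i <;> simp [restr, extAsg, hj]

theorem margS_insert_extAsg (p : Cube n → ℝ) {S : Finset (Fin n)} {i : Fin n} (hi : i ∉ S)
    (y : Asg S) (a : ↥B) :
    margS p (insert i S) (extAsg i y a) = pushforward p (fun x => (restr S x, x i)) (y, a) := by
  simp only [margS, pushforward, restr_insert_eq_extAsg_iff hi, Prod.mk.injEq]

theorem margTo_margS (p : Cube n → ℝ) {R S : Finset (Fin n)} (h : R ⊆ S) :
    margTo (margS p S) h = margS p R :=
  pushforward_pushforward p (restr S) (res h)

theorem injective_restr_prodMk_compl (S : Finset (Fin n)) :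
    Function.Injective fun x : Cube n => (restr S x, fun i : ↥Sᶜ => x i) := by
  intro x x' h
  obtain ⟨hS, hSc⟩ := Prod.mk.inj h
  funext i
  by_cases hi : i ∈ S
  · exact congrFun hS ⟨i, hi⟩
  · exact congrFun hSc ⟨i, Finset.mem_compl.mpr hi⟩

end Restriction

namespace SAFamily

variable {n k : ℕ}

section OfMarginals

variable {p : Cube n → ℝ} (hp : 0 ≤ p) (hp1 : ∑ x, p x = 1)

/-- The Sherali–Adams family of the marginals of a probability distribution `p` on the cube. -/
def ofMarginals (k : ℕ) : SAFamily n k where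
  μ := margS p
  nonneg S _ := pushforward_nonneg hp (restr S)
  sum_one S _ := (sum_pushforward p (restr S)).trans hp1
  consistent S T _ z := by rw [margTo_margS, margTo_margS]

theorem pairExp_ofMarginals (i j : Fin n) :
    pairExp (ofMarginals hp hp1 k) i j = ∑ x, p x * ((x i : ℝ) * (x j : ℝ)) := by
  simp_rw [pairExp, mul_assoc]
  exact sum_pushforward_mul p (restr {i, j}) fun y => (y ⟨i, by simp⟩ : ℝ) * (y ⟨j, by simp⟩ : ℝ)

theorem condEnt_ofMarginals {S : Finset (Fin n)} {i : Fin n} (hi : i ∉ S) :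
    condEnt (ofMarginals hp hp1 k) S i = entCond p (restr S) fun x => x i := by
  simp only [condEnt, ofMarginals, margS_insert_extAsg p hi]
  rfl

theorem ent_le_pseudoEnt_ofMarginals (k' : ℕ) : ent p ≤ pseudoEnt (ofMarginals hp hp1 k) k' := by
  refine Finset.le_inf' _ _ fun S _ => ?_
  calc ent p
      ≤ ent (pushforward p (restr S)) + ∑ i : ↥Sᶜ, entCond p (restr S) fun x => x i :=
        ent_le_ent_pushforward_add_sum_entCond hp (injective_restr_prodMk_compl S)
    _ = ent (margS p S) + ∑ i ∈ Sᶜ, condEnt (ofMarginals hp hp1 k) S i := by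
        rw [← Finset.sum_coe_sort Sᶜ]
        exact congrArg _ (Finset.sum_congr rfl fun i _ =>
          (condEnt_ofMarginals hp hp1 (Finset.mem_compl.mp i.2)).symm)

end OfMarginals

theorem abs_pairExp_le_one (F : SAFamily n k) (hk : 2 ≤ k) (i j : Fin n) : |pairExp F i j| ≤ 1 := by
  have hc : ({i, j} : Finset (Fin n)).card ≤ k := Finset.card_le_two.trans hk
  calc |pairExp F i j|
      ≤ ∑ y, |F.μ {i, j} y * (y ⟨i, by simp⟩ : ℝ) * (y ⟨j, by simp⟩ : ℝ)| :=
        Finset.abs_sum_le_sum_abs _ _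
    _ = ∑ y, F.μ {i, j} y := by
        simp_rw [abs_mul, abs_spin, mul_one, abs_of_nonneg (F.nonneg _ hc _)]
    _ = 1 := F.sum_one _ hc

theorem condEnt_le_two (F : SAFamily n k) {S : Finset (Fin n)} (hS : S.card < k) (i : Fin n) :
    condEnt F S i ≤ 2 := by
  have ent_le (y : Asg S) : ent (fun a => F.μ (insert i S) (extAsg i y a) / F.μ S y) ≤ 2 := by
    have cond_nonneg : 0 ≤ fun a => F.μ (insert i S) (extAsg i y a) / F.μ S y := fun a =>
      div_nonneg (F.nonneg _ ((Finset.card_insert_le i S).trans hS) _) (F.nonneg S hS.le y)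
    have card_le : (Fintype.card ↥B : ℝ) ≤ 2 := by
      rw [Fintype.card_coe]
      exact_mod_cast Finset.card_le_two
    linarith [ent_le_card_sub_sum cond_nonneg,
      Finset.sum_nonneg fun a (_ : a ∈ Finset.univ) => cond_nonneg a]
  calc condEnt F S i
      ≤ ∑ y, F.μ S y * 2 :=
        Finset.sum_le_sum fun y _ => mul_le_mul_of_nonneg_left (ent_le y) (F.nonneg S hS.le y)
    _ = 2 := by rw [← Finset.sum_mul, F.sum_one S hS.le, one_mul]

theorem pseudoEnt_le_two_mul (F : SAFamily n k) (hk : 0 < k) (k' : ℕ) : pseudoEnt F k' ≤ 2 * n := by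
  have ent_empty : ent (F.μ ∅) ≤ 0 := by
    have := ent_le_card_sub_sum (F.nonneg ∅ (by simp))
    rw [F.sum_one ∅ (by simp)] at this
    simpa using this
  calc pseudoEnt F k'
      ≤ ent (F.μ ∅) + ∑ i ∈ ∅ᶜ, condEnt F ∅ i := Finset.inf'_le _ (by simp)
    _ ≤ 0 + ∑ _i ∈ (∅ : Finset (Fin n))ᶜ, 2 :=
        add_le_add ent_empty (Finset.sum_le_sum fun i _ => F.condEnt_le_two (by simpa using hk) i)
    _ = 2 * n := by simp [mul_comm]

end SAFamily

section Relaxation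

variable {n k : ℕ}

/-- The exponent `Σ_{i,j} J i j x_i x_j` of the Ising weight of a spin configuration. -/
def isingEnergy (J : Fin n → Fin n → ℝ) (x : Cube n) : ℝ :=
  ∑ i, ∑ j, J i j * (x i : ℝ) * (x j : ℝ)

/-- The objective of the level-`k` Sherali–Adams relaxation. -/
def saValue (J : Fin n → Fin n → ℝ) (F : SAFamily n k) : ℝ :=
  ∑ i, ∑ j, J i j * pairExp F i j + pseudoEnt F (k - 1)

theorem bddAbove_saValue (J : Fin n → Fin n → ℝ) (hk : 2 ≤ k) :
    BddAbove {v : ℝ | ∃ F : SAFamily n k, v = saValue J F} := by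
  refine ⟨JT J + 2 * n, ?_⟩
  rintro _ ⟨F, rfl⟩
  refine add_le_add (Finset.sum_le_sum fun i _ => Finset.sum_le_sum fun j _ => ?_)
    (F.pseudoEnt_le_two_mul (by lia) _)
  calc J i j * pairExp F i j
      ≤ |J i j| * |pairExp F i j| := (le_abs_self _).trans (abs_mul _ _).le
    _ ≤ |J i j| := mul_le_of_le_one_right (abs_nonneg _) (F.abs_pairExp_le_one hk i j)

variable {p : Cube n → ℝ} (hp : 0 ≤ p) (hp1 : ∑ x, p x = 1)

theorem sum_mul_isingEnergy (J : Fin n → Fin n → ℝ) :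
    ∑ x, p x * isingEnergy J x =
      ∑ i, ∑ j, J i j * pairExp (SAFamily.ofMarginals hp hp1 k) i j := by
  simp_rw [SAFamily.pairExp_ofMarginals, isingEnergy, Finset.mul_sum]
  rw [Finset.sum_comm]
  refine Finset.sum_congr rfl fun i _ => ?_
  rw [Finset.sum_comm]
  exact Finset.sum_congr rfl fun j _ => Finset.sum_congr rfl fun x _ => by ring

theorem sum_mul_isingEnergy_add_ent_le_saValue (J : Fin n → Fin n → ℝ) :
    ∑ x, p x * isingEnergy J x + ent p ≤ saValue J (SAFamily.ofMarginals hp hp1 k) :=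
  add_le_add (sum_mul_isingEnergy hp hp1 J).le (SAFamily.ent_le_pseudoEnt_ofMarginals hp hp1 _)

end Relaxation

/-- The level-`k` Sherali–Adams relaxation (energy plus augmented mean-field
pseudo-entropy at level `k-1`) upper-bounds `log Z`; moreover every probability
distribution on `{-1,1}^n` induces an SA(k)-consistent family via its marginals. -/
theorem logZ_le_SA_relaxation (n k : ℕ) (hn : 1 ≤ n) (hk : 2 ≤ k)
    (J : Fin n → Fin n → ℝ) (Z : ℝ)
    (hZ : Z = ∑ x : Cube n,
      Real.exp (∑ i : Fin n, ∑ j : Fin n, J i j * (x i : ℝ) * (x j : ℝ))) :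
    Real.log Z ≤ sSup {v : ℝ | ∃ F : SAFamily n k,
        v = (∑ i : Fin n, ∑ j : Fin n, J i j * pairExp F i j) + pseudoEnt F (k - 1)} ∧
      ∀ μ : Cube n → ℝ, (∀ x, 0 ≤ μ x) → (∑ x : Cube n, μ x = 1) →
        ∃ F : SAFamily n k, ∀ S : Finset (Fin n), S.card ≤ k → ∀ y : Asg S,
          F.μ S y = margS μ S y := by
  subst hZ
  refine ⟨?_, fun μ hμ hμ1 => ⟨.ofMarginals hμ hμ1 k, fun _ _ _ => rfl⟩⟩
  let E := isingEnergy J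
  calc Real.log (∑ x, Real.exp (E x))
      = ∑ x, gibbs E x * E x + ent (gibbs E) := log_sum_exp_eq_sum_gibbs_mul_add_ent E
    _ ≤ saValue J (.ofMarginals (gibbs_nonneg E) (sum_gibbs E) k) :=
      sum_mul_isingEnergy_add_ent_le_saValue (gibbs_nonneg E) (sum_gibbs E) J
    _ ≤ sSup {v : ℝ | ∃ F : SAFamily n k, v = saValue J F} :=
      le_csSup (bddAbove_saValue J hk) ⟨_, rfl⟩
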